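/- arXiv:2405.02588 — 3 statements merged into one kernel-verified Lean document; each statement's English description precedes it below -/
import Mathlib

section
/- Suppose |f1 - f0 - ⟨g, η⟩ - (1/2)⟨A η, η⟩| ≤ (L_H/2)‖η‖³, ‖G - g‖ ≤ δ_g, and ‖(H - A) η‖ ≤ δ_H ‖η‖. Then f1 - f0 - m(η) ≤ δ_g ‖η‖ + (1/2) δ_H ‖η‖² + (L_H/2 - σ/3) ‖η‖³. (Lemma 3.2 of the paper, the sufficient-decrease estimate.) -/
open RealInnerProductSpace

/-!
Replacing the exact gradient and Hessian by `G` and `H` perturbs the second-order Taylor polynomial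
by the quadratic polynomial with coefficients `G - g` and `H - A`, which Cauchy–Schwarz bounds by
the accuracies. The cubic Taylor remainder is then offset by the regularization term.
-/

section InexactModel

variable {E : Type*} [SeminormedAddCommGroup E] [InnerProductSpace ℝ E]

/-- The quadratic model of the increment of a function along a step `ξ`, built from a gradient `g`
and a Hessian `A`; the constant term of the Taylor polynomial is left out. -/
noncomputable def quadraticModel (g : E) (A : E →ₗ[ℝ] E) (ξ : E) : ℝ :=
  ⟪g, ξ⟫ + (1 / 2) * ⟪A ξ, ξ⟫

/-- The cubic-regularized model whose minimization gives the step of the algorithm: the quadratic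
model with a penalty of weight `σ / 3` on the cube of the step length. -/
noncomputable def cubicModel (g : E) (A : E →ₗ[ℝ] E) (σ : ℝ) (ξ : E) : ℝ :=
  quadraticModel g A ξ + (σ / 3) * ‖ξ‖ ^ 3

lemma quadraticModel_sub (G g : E) (H A : E →ₗ[ℝ] E) (ξ : E) :
    quadraticModel (G - g) (H - A) ξ = quadraticModel G H ξ - quadraticModel g A ξ := by
  simp only [quadraticModel, LinearMap.sub_apply, inner_sub_left]
  ring

lemma abs_real_inner_le_mul_norm_of_norm_le {x : E} {c : ℝ} (hx : ‖x‖ ≤ c) (y : E) :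
    |⟪x, y⟫| ≤ c * ‖y‖ :=
  (abs_real_inner_le_norm x y).trans (mul_le_mul_of_nonneg_right hx (norm_nonneg y))

lemma abs_quadraticModel_le {g ξ : E} {A : E →ₗ[ℝ] E} {a b : ℝ}
    (hg : ‖g‖ ≤ a) (hA : ‖A ξ‖ ≤ b * ‖ξ‖) :
    |quadraticModel g A ξ| ≤ a * ‖ξ‖ + (1 / 2) * b * ‖ξ‖ ^ 2 :=
  calc
    |quadraticModel g A ξ| ≤ |⟪g, ξ⟫| + |(1 / 2) * ⟪A ξ, ξ⟫| := abs_add_le _ _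
    _ = |⟪g, ξ⟫| + (1 / 2) * |⟪A ξ, ξ⟫| := by rw [abs_mul, abs_of_pos (one_half_pos (α := ℝ))]
    _ ≤ a * ‖ξ‖ + (1 / 2) * (b * ‖ξ‖ * ‖ξ‖) := by
      gcongr
      · exact abs_real_inner_le_mul_norm_of_norm_le hg ξ
      · exact abs_real_inner_le_mul_norm_of_norm_le hA ξ
    _ = a * ‖ξ‖ + (1 / 2) * b * ‖ξ‖ ^ 2 := by ring

theorem inexact_model_decrease_estimate_general
    {G g η : E} {H A : E →ₗ[ℝ] E} {σ L_H δ_g δ_H f0 f1 : ℝ}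
    (hTaylor : f1 - f0 - quadraticModel g A η ≤ (L_H / 2) * ‖η‖ ^ 3)
    (hG : ‖G - g‖ ≤ δ_g) (hHA : ‖(H - A) η‖ ≤ δ_H * ‖η‖) :
    f1 - f0 - cubicModel G H σ η ≤
      δ_g * ‖η‖ + (1 / 2) * δ_H * ‖η‖ ^ 2 + (L_H / 2 - σ / 3) * ‖η‖ ^ 3 := by
  have hModel : -quadraticModel (G - g) (H - A) η ≤ δ_g * ‖η‖ + (1 / 2) * δ_H * ‖η‖ ^ 2 :=
    (neg_le_abs _).trans (abs_quadraticModel_le hG hHA)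
  calc
    f1 - f0 - cubicModel G H σ η
      = -quadraticModel (G - g) (H - A) η + (f1 - f0 - quadraticModel g A η)
          - (σ / 3) * ‖η‖ ^ 3 := by
        rw [cubicModel, quadraticModel_sub]
        ring
    _ ≤ (δ_g * ‖η‖ + (1 / 2) * δ_H * ‖η‖ ^ 2) + (L_H / 2) * ‖η‖ ^ 3 - (σ / 3) * ‖η‖ ^ 3 := by
        gcongr
    _ = δ_g * ‖η‖ + (1 / 2) * δ_H * ‖η‖ ^ 2 + (L_H / 2 - σ / 3) * ‖η‖ ^ 3 := by ring

end InexactModel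

/-- Lemma 3.2: the sufficient-decrease estimate for the cubic-regularized model
with inexact gradient and Hessian. -/
theorem inexact_model_decrease_estimate
    {E : Type*} [NormedAddCommGroup E] [InnerProductSpace ℝ E] [FiniteDimensional ℝ E]
    (G g η : E) (H A : E →L[ℝ] E) (hH : IsSelfAdjoint H) (hA : IsSelfAdjoint A)
    (σ L_H δ_g δ_H : ℝ) (hσ : 0 < σ) (hL : 0 < L_H)
    (hδg : δ_g ∈ Set.Ioo (0 : ℝ) 1) (hδH : δ_H ∈ Set.Ioo (0 : ℝ) 1)
    (m : E → ℝ)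
    (hm : ∀ ξ : E, m ξ = ⟪G, ξ⟫ + (1 / 2) * ⟪H ξ, ξ⟫ + (σ / 3) * ‖ξ‖ ^ 3)
    (f0 f1 : ℝ)
    (hTaylor : |f1 - f0 - ⟪g, η⟫ - (1 / 2) * ⟪A η, η⟫| ≤ (L_H / 2) * ‖η‖ ^ 3)
    (hG : ‖G - g‖ ≤ δ_g)
    (hHa : ‖(H - A) η‖ ≤ δ_H * ‖η‖) :
    f1 - f0 - m η ≤ δ_g * ‖η‖ + (1 / 2) * δ_H * ‖η‖ ^ 2 + (L_H / 2 - σ / 3) * ‖η‖ ^ 3 := by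
  rw [hm]
  exact inexact_model_decrease_estimate_general (H := H) (A := A)
    ((sub_sub _ _ _).ge.trans (le_of_abs_le hTaylor)) hG hHa
end

section
/- Let σ : ℕ → ℝ be a sequence with σ(0) > 0, let γ > 1 and L_H > 0, and suppose for every k: either σ(k+1) = σ(k)/γ or σ(k+1) = γ σ(k), and moreover if σ(k) ≥ 2 L_H then σ(k+1) = σ(k)/γ. Then σ(k) ≤ max{σ(0), 2 γ L_H} for every k. (Lemma 3.4, the uniform upper bound on the cubic regularization parameters.) -/
/-! The parameter can only grow through an unsuccessful iteration, which starts below `2 * L_H` and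
so ends below `2 * γ * L_H`, or through division by `γ` when it is negative, which leaves it
nonpositive. Hence `max (σ k) (2 * γ * L_H)` never increases. -/

theorem le_sup_of_succ_le_sup {α : Type*} [SemilatticeSup α] {u : ℕ → α} {b : α}
    (h : ∀ k, u (k + 1) ≤ u k ⊔ b) (k : ℕ) : u k ≤ u 0 ⊔ b := by
  have h_anti : Antitone fun k ↦ u k ⊔ b :=
    antitone_nat_of_succ_le fun k ↦ sup_le (h k) le_sup_right
  exact le_sup_left.trans (h_anti k.zero_le)

section LinearOrderedSemifield

variable {K : Type*} [Semifield K] [LinearOrder K] [IsStrictOrderedRing K]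

theorem div_le_max_zero_of_one_le {a c : K} (hc : 1 ≤ c) : a / c ≤ max a 0 := by
  rcases le_total 0 a with ha | ha
  · exact (div_le_self ha hc).trans (le_max_left a 0)
  · exact (div_nonpos_of_nonpos_of_nonneg ha (zero_le_one.trans hc)).trans (le_max_right a 0)

theorem le_max_mul_of_le_div_or_le_mul {s s' γ τ : K} (hγ : 1 ≤ γ) (hτ : 0 ≤ τ)
    (hstep : s' ≤ s / γ ∨ s' ≤ γ * s) (hsucc : τ ≤ s → s' ≤ s / γ) :
    s' ≤ max s (γ * τ) := by
  have hγ0 : 0 ≤ γ := zero_le_one.trans hγ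
  have of_le_div (h : s' ≤ s / γ) : s' ≤ max s (γ * τ) :=
    calc
      s' ≤ s / γ := h
      _ ≤ max s 0 := div_le_max_zero_of_one_le hγ
      _ ≤ max s (γ * τ) := max_le_max_left s (mul_nonneg hγ0 hτ)
  rcases le_or_gt τ s with hs | hs
  · exact of_le_div (hsucc hs)
  · rcases hstep with h | h
    · exact of_le_div h
    · exact h.trans (le_max_of_le_right (mul_le_mul_of_nonneg_left hs.le hγ0))

theorem sigma_uniformly_bounded_general {σ : ℕ → K} {γ τ : K} (hγ : 1 ≤ γ) (hτ : 0 ≤ τ)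
    (hstep : ∀ k, σ (k + 1) ≤ σ k / γ ∨ σ (k + 1) ≤ γ * σ k)
    (hsucc : ∀ k, τ ≤ σ k → σ (k + 1) ≤ σ k / γ) (k : ℕ) :
    σ k ≤ max (σ 0) (γ * τ) :=
  le_sup_of_succ_le_sup
    (fun k ↦ le_max_mul_of_le_div_or_le_mul hγ hτ (hstep k) (hsucc k)) k

end LinearOrderedSemifield

/-- Lemma 3.4: the uniform upper bound on the cubic regularization parameters. -/
theorem sigma_uniformly_bounded
    (σ : ℕ → ℝ) (γ L_H : ℝ)
    (hσ0 : 0 < σ 0) (hγ : 1 < γ) (hL : 0 < L_H)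
    (hstep : ∀ k : ℕ, σ (k + 1) = σ k / γ ∨ σ (k + 1) = γ * σ k)
    (hsucc : ∀ k : ℕ, σ k ≥ 2 * L_H → σ (k + 1) = σ k / γ) :
    ∀ k : ℕ, σ k ≤ max (σ 0) (2 * γ * L_H) := by
  rw [mul_comm 2 γ, mul_assoc]
  exact sigma_uniformly_bounded_general hγ.le (by positivity)
    (fun k ↦ (hstep k).imp Eq.le Eq.le) fun k hk ↦ (hsucc k hk).le
end

section
/- Let γ > 1, L_H > 0, 0 < σ₀ ≤ 2 γ L_H, N ∈ ℕ, and let S ⊆ {0, 1, ..., N-1}. Let σ : ℕ → ℝ satisfy σ(0) = σ₀ and, for each k < N, σ(k+1) = σ(k)/γ if k ∈ S and σ(k+1) = γ σ(k) if k ∉ S; assume σ(N) ≤ 2 γ L_H. Let f : ℕ → ℝ be nonincreasing with f(k) ≥ f_min for all k, let c > 0, and suppose f(k) - f(k+1) ≥ c for every k ∈ S with at most one exception. Then N ≤ 2 (f(0) - f_min)/c + 2 + log_γ(2 γ L_H / σ₀). (Theorem 3.1: with c = ρ_TH κ_σ min{ε_g², ε_H³}, the inexact Riemannian adaptive cubic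 regularization algorithm terminates after at most O(max{ε_g^{-2}, ε_H^{-3}}) iterations.) -/
/-!
After `n` steps, `s` of them successful, the regularization parameter has been multiplied by
`γ ^ (n - 2 * s)`, so an upper bound on its final value forces `n ≤ 2 * s + log_γ (σ_max / σ 0)`.
The objective decreases by at most `f 0 - f_min` in total and by at least `c` at each successful
step that is not exceptional, which bounds `s`.
-/

open Finset

section RegularizationParameter

variable {S : Set ℕ} [DecidablePred (· ∈ S)] {n : ℕ}

theorem eq_mul_zpow_sub_two_mul_count {G₀ : Type*} [CommGroupWithZero G₀] {γ : G₀} {σ : ℕ → G₀}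
    (hγ : γ ≠ 0)
    (hstep : ∀ k < n, (k ∈ S → σ (k + 1) = σ k / γ) ∧ (k ∉ S → σ (k + 1) = γ * σ k)) :
    σ n = σ 0 * γ ^ ((n : ℤ) - 2 * Nat.count (· ∈ S) n) := by
  induction n with
  | zero => simp
  | succ n ih =>
    have hn := ih fun k hk => hstep k (hk.trans n.lt_succ_self)
    obtain ⟨hsuccess, hfailure⟩ := hstep n n.lt_succ_self
    by_cases h : n ∈ S
    · have hexp : ((n + 1 : ℕ) : ℤ) - 2 * Nat.count (· ∈ S) (n + 1) =
          (n - 2 * Nat.count (· ∈ S) n) - 1 := by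
        rw [Nat.count_succ, if_pos h]
        push_cast
        ring
      rw [hsuccess h, hn, hexp, zpow_sub_one₀ hγ, div_eq_mul_inv, mul_assoc]
    · have hexp : ((n + 1 : ℕ) : ℤ) - 2 * Nat.count (· ∈ S) (n + 1) =
          (n - 2 * Nat.count (· ∈ S) n) + 1 := by
        rw [Nat.count_succ, if_neg h]
        push_cast
        ring
      rw [hfailure h, hn, hexp, zpow_add_one₀ hγ, mul_comm, mul_assoc]

theorem le_two_mul_count_add_logb {γ σ_max : ℝ} {σ : ℕ → ℝ} (hγ : 1 < γ) (hσ₀ : 0 < σ 0)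
    (hstep : ∀ k < n, (k ∈ S → σ (k + 1) = σ k / γ) ∧ (k ∉ S → σ (k + 1) = γ * σ k))
    (hσn : σ n ≤ σ_max) :
    (n : ℝ) ≤ 2 * Nat.count (· ∈ S) n + Real.logb γ (σ_max / σ 0) := by
  have hγ₀ : 0 < γ := one_pos.trans hγ
  have hratio : γ ^ ((n : ℤ) - 2 * Nat.count (· ∈ S) n) ≤ σ_max / σ 0 := by
    rwa [le_div_iff₀' hσ₀, ← eq_mul_zpow_sub_two_mul_count hγ₀.ne' hstep]
  have hlog := Real.logb_le_logb_of_le hγ (zpow_pos hγ₀ _) hratio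
  rw [← Real.rpow_intCast, Real.logb_rpow hγ₀ hγ.ne'] at hlog
  push_cast at hlog
  linarith

end RegularizationParameter

section ObjectiveDecrease

theorem card_nsmul_le_sub_of_forall_le_sub {M : Type*} [AddCommGroup M] [PartialOrder M]
    [IsOrderedAddMonoid M] {f : ℕ → M} {c : M} {n : ℕ} {T : Finset ℕ} (hT : T ⊆ range n)
    (hmono : ∀ k < n, f (k + 1) ≤ f k) (hdec : ∀ k ∈ T, c ≤ f k - f (k + 1)) :
    #T • c ≤ f 0 - f n :=
  calc
    #T • c ≤ ∑ k ∈ T, (f k - f (k + 1)) := card_nsmul_le_sum T _ c hdec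
    _ ≤ ∑ k ∈ range n, (f k - f (k + 1)) :=
      sum_le_sum_of_subset_of_nonneg hT fun k hk _ => sub_nonneg.2 (hmono k (mem_range.1 hk))
    _ = f 0 - f n := sum_range_sub' f n

theorem count_le_sub_div_add_card {K : Type*} [Field K] [LinearOrder K] [IsStrictOrderedRing K]
    {S : Set ℕ} [DecidablePred (· ∈ S)] {E : Finset ℕ} {f : ℕ → K} {f_min c : K} {n : ℕ}
    (hmono : ∀ k < n, f (k + 1) ≤ f k) (hbdd : f_min ≤ f n) (hc : 0 < c)
    (hdec : ∀ k < n, k ∈ S → k ∉ E → c ≤ f k - f (k + 1)) :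
    (Nat.count (· ∈ S) n : K) ≤ (f 0 - f_min) / c + #E := by
  let T := {k ∈ range n | k ∈ S} \ E
  have hcount : (Nat.count (· ∈ S) n : K) ≤ #T + #E := by
    rw [Nat.count_eq_card_filter_range]
    exact_mod_cast card_le_card_sdiff_add_card
  have hT : T ⊆ range n := sdiff_subset.trans (filter_subset _ _)
  have hdecT : ∀ k ∈ T, c ≤ f k - f (k + 1) := fun k hk => by
    obtain ⟨hk_success, hkE⟩ := mem_sdiff.1 hk
    obtain ⟨hkn, hkS⟩ := mem_filter.1 hk_success
    exact hdec k (mem_range.1 hkn) hkS hkE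
  have hcard : (#T : K) ≤ (f 0 - f_min) / c := by
    rw [le_div_iff₀ hc, ← nsmul_eq_mul]
    exact (card_nsmul_le_sub_of_forall_le_sub hT hmono hdecT).trans (sub_le_sub_left hbdd _)
  exact hcount.trans (by gcongr)

end ObjectiveDecrease

theorem total_iteration_bound_general {γ σ_max f_min c : ℝ} {σ f : ℕ → ℝ} {n : ℕ} {S : Set ℕ}
    {E : Finset ℕ} (hγ : 1 < γ) (hσ₀ : 0 < σ 0)
    (hstep : ∀ k < n, (k ∈ S → σ (k + 1) = σ k / γ) ∧ (k ∉ S → σ (k + 1) = γ * σ k))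
    (hσn : σ n ≤ σ_max) (hmono : ∀ k < n, f (k + 1) ≤ f k) (hbdd : f_min ≤ f n) (hc : 0 < c)
    (hdec : ∀ k < n, k ∈ S → k ∉ E → c ≤ f k - f (k + 1)) :
    (n : ℝ) ≤ 2 * (f 0 - f_min) / c + 2 * #E + Real.logb γ (σ_max / σ 0) := by
  classical
  calc
    (n : ℝ) ≤ 2 * Nat.count (· ∈ S) n + Real.logb γ (σ_max / σ 0) :=
      le_two_mul_count_add_logb hγ hσ₀ hstep hσn
    _ ≤ 2 * ((f 0 - f_min) / c + #E) + Real.logb γ (σ_max / σ 0) := by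
      gcongr
      exact count_le_sub_div_add_card hmono hbdd hc hdec
    _ = 2 * (f 0 - f_min) / c + 2 * #E + Real.logb γ (σ_max / σ 0) := by ring

/-- Theorem 3.1: the total iteration bound for the inexact Riemannian adaptive
cubic regularization algorithm. -/
theorem total_iteration_bound
    (γ L_H σ₀ : ℝ) (hγ : 1 < γ) (hL : 0 < L_H)
    (hσ₀ : 0 < σ₀) (hσ₀le : σ₀ ≤ 2 * γ * L_H)
    (N : ℕ) (S : Finset ℕ) (hS : S ⊆ Finset.range N)
    (σ : ℕ → ℝ) (hσ0 : σ 0 = σ₀)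
    (hstep : ∀ k < N, (k ∈ S → σ (k + 1) = σ k / γ) ∧ (k ∉ S → σ (k + 1) = γ * σ k))
    (hσN : σ N ≤ 2 * γ * L_H)
    (f : ℕ → ℝ) (f_min c : ℝ)
    (hmono : ∀ k : ℕ, f (k + 1) ≤ f k)
    (hbdd : ∀ k : ℕ, f_min ≤ f k)
    (hc : 0 < c)
    (k₀ : ℕ)
    (hdec : ∀ k ∈ S, k ≠ k₀ → f k - f (k + 1) ≥ c) :
    (N : ℝ) ≤ 2 * (f 0 - f_min) / c + 2 + Real.logb γ (2 * γ * L_H / σ₀) := by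
  subst hσ0
  simpa using total_iteration_bound_general (S := S) (E := {k₀}) hγ hσ₀ hstep hσN
    (fun k _ => hmono k) (hbdd N) hc fun k _ hkS hkE => hdec k hkS (by simpa using hkE)
end
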